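/- Let Q be an atomless, countably closed partial order, let S ⊆ Q with |S| < 2^ℵ₀, and let p ∈ Q. Then there exists q ≤ p such that no r ∈ S satisfies r ≤ q. -/

import Mathlib

open Cardinal

/-- Two elements of a partial order are incompatible if no element lies below both. -/
def Incompat {Q : Type} [PartialOrder Q] (p q : Q) : Prop := ¬ ∃ r, r ≤ p ∧ r ≤ q

/-- If `Q` is an atomless countably closed partial order,
`S ⊆ Q` has size `< 2^ℵ₀`, and `p ∈ Q`, then there is `q ≤ p` with no element
of `S` below `q`. -/
theorem avoid_small_set_below (Q : Type) [PartialOrder Q]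
    (hatomless : ∀ p : Q, ∃ q r, q ≤ p ∧ r ≤ p ∧ Incompat q r)
    (hclosed : ∀ f : ℕ → Q, (∀ n, f (n + 1) ≤ f n) → ∃ q, ∀ n, q ≤ f n)
    (S : Set Q) (hS : #S < 2 ^ aleph0) (p : Q) :
    ∃ q ≤ p, ∀ r ∈ S, ¬ r ≤ q := by
  by_contra! hcon
  choose a b ha hb hab using hatomless
  let g : (ℕ → Bool) → ℕ → Q := fun x n =>
    Nat.rec p (fun k q => if x k then a q else b q) n
  have g0 : ∀ x, g x 0 = p := fun _ => rfl
  have gs : ∀ x n, g x (n + 1) = if x n then a (g x n) else b (g x n) := fun _ _ => rfl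
  have hdec : ∀ x n, g x (n + 1) ≤ g x n := by
    intro x n
    rw [gs]
    split_ifs
    · exact ha _
    · exact hb _
  choose L hL using fun x => hclosed (g x) (hdec x)
  choose s hsS hs using fun x => hcon (L x) (hL x 0)
  have hle : ∀ x n, s x ≤ g x n := fun x n => (hs x).trans (hL x n)
  have hinj : Function.Injective s := by
    intro x y hxy
    have key : ∀ n, g x n = g y n → x n = y n := by
      intro n hn
      have h1 := hle x (n + 1)
      have h2 := hle y (n + 1)
      rw [gs] at h1 h2
      rw [← hxy, ← hn] at h2
      cases hx : x n <;> cases hy : y n <;> simp only [hx, hy] at h1 h2 ⊢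
      · exact (hab _ ⟨s x, by simpa using h2, by simpa using h1⟩).elim
      · exact (hab _ ⟨s x, by simpa using h1, by simpa using h2⟩).elim
    have heq : ∀ n, g x n = g y n := by
      intro n
      induction n with
      | zero => rfl
      | succ n ih => rw [gs, gs, key n ih, ih]
    funext n
    exact key n (heq n)
  have hc : #(ℕ → Bool) ≤ #S :=
    Cardinal.mk_le_of_injective (f := fun x => (⟨s x, hsS x⟩ : S))
      (fun x y h => hinj (congrArg Subtype.val h))
  have h2 : #(ℕ → Bool) = 2 ^ aleph0 := by simp
  rw [h2] at hc
  exact absurd hS (not_lt.mpr hc)
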